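/- Consider Contracting-Domain Newton Method II: given x₀ ∈ dom ψ, positive coefficients {a_k}, A_k := Σ_{i=1}^k a_i, γ_k := a_{k+1}/A_{k+1}, points x_{k+1} ∈ dom ψ of the form x_{k+1} = x_k + γ_k(v_{k+1} − x_k) with v_{k+1} ∈ dom ψ, satisfying the stationarity condition ⟨∇f(x_k) + ∇²f(x_k)(x_{k+1} − x_k), x − v_{k+1}⟩ + (1/γ_k) ψ(γ_k x + (1 − γ_k) x_k) ≥ (1/γ_k) ψ(x_{k+1}) for all x ∈ dom ψ. Then for every k ≥ 0 and all x ∈ dom ψ, φ_k(x) ≥ A_k F(x_k) − B_k, where φ_k(x) := Σ_{i=1}^k a_i [f(x_i) + ⟨∇f(x_i), x − x_i⟩ + ψ(x)], B_k := (H_ν D^{2+ν}/(1+ν)) Σ_{i=1}^k a_i^{2+ν}/A_i^{1+ν}. Consequently, with A_k := k³, F(x_k) − F* ≤ ℓ_k := F(x_k) − φ_k*/A_k ≤ B_k/A_k = O(H_ν D^{2+ν}/k^{1+ν}) for all k ≥ 1. -/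

import Mathlib

/-!
With `g i = f' (x i)`, the estimating-function inequality is proved by induction on `k`. Convexity
of `f` at `x (k+1)` and the identity
`A (k+1) • x (k+1) = A k • x k + a (k+1) • v (k+1)` turn the linear parts of
`A k * f (x k) + a (k+1) * (f (x (k+1)) + g (k+1) (y - x (k+1)))` into
`A (k+1) * f (x (k+1)) + a (k+1) * g (k+1) (y - v (k+1))`. Convexity of `ψ` and the stationarity
condition then give the inequality at `k + 1` up to the error
`a (k+1) * (g (k+1) - g k - f'' (x k) (x (k+1) - x k)) (y - v (k+1))`.
The Hölder Taylor bound `norm_taylor_le`, together with `‖x (k+1) - x k‖ ≤ γ k * D`, bounds this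
error by the last summand of `B (k+1)`.

The inequality shows that `φ k` is bounded below on `s`, and `φ k ≤ A k * F` there by
convexity; hence the bounds on `ℓ k`. If `A k = k ^ 3`, then `a i ≤ 3 * i ^ 2`, so each summand of
`B k` is at most `27 * i ^ (1 - ν)` and `B k / A k` is at most a multiple of `k ^ (-(1 + ν))`.
-/

theorem gradient_ineq {E : Type*} [NormedAddCommGroup E] [NormedSpace ℝ E]
    {s : Set E} {f : E → ℝ} {f' : E → E →L[ℝ] ℝ} (hconv : ConvexOn ℝ s f)
    {p q : E} (hp : p ∈ s) (hq : q ∈ s) (hder : HasFDerivAt f (f' p) p) :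
    f p + f' p (q - p) ≤ f q := by
  have hc : ConvexOn ℝ (AffineMap.lineMap p q ⁻¹' s) (f ∘ (AffineMap.lineMap p q : ℝ →ᵃ[ℝ] E)) :=
    hconv.comp_affineMap _
  have hd : HasDerivAt (f ∘ (AffineMap.lineMap p q : ℝ →ᵃ[ℝ] E)) (f' p (q - p)) 0 := by
    refine HasFDerivAt.comp_hasDerivAt (0 : ℝ) ?_ AffineMap.hasDerivAt_lineMap
    simpa using hder
  have := hc.le_slope_of_hasDerivAt (x := 0) (y := 1) (by simpa using hp) (by simpa using hq)
    one_pos hd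
  simp only [slope_def_field, Function.comp_apply, AffineMap.lineMap_apply_zero,
    AffineMap.lineMap_apply_one, sub_zero, div_one] at this
  linarith

/-- First-order Taylor bound for a map whose derivative is `ν`-Hölder on a convex set. -/
theorem norm_taylor_le {E G : Type*} [NormedAddCommGroup E] [NormedSpace ℝ E]
    [NormedAddCommGroup G] [NormedSpace ℝ G]
    {s : Set E} (hs : Convex ℝ s) {g : E → G} {g' : E → E →L[ℝ] G}
    (hder : ∀ x ∈ s, HasFDerivAt g (g' x) x) {ν H : ℝ} (hν : 0 ≤ ν)
    (hHolder : ∀ x ∈ s, ∀ y ∈ s, ‖g' x - g' y‖ ≤ H * ‖x - y‖ ^ ν)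
    {p q : E} (hp : p ∈ s) (hq : q ∈ s) :
    ‖g q - g p - g' p (q - p)‖ ≤ H * ‖q - p‖ ^ (1 + ν) / (1 + ν) := by
  set L : ℝ → E := fun t => AffineMap.lineMap p q t with hL
  have hmem : ∀ t ∈ Set.Icc (0 : ℝ) 1, L t ∈ s := fun t ht => hs.lineMap_mem hp hq ht
  have hdL : ∀ t, HasDerivAt L (q - p) t := fun t => AffineMap.hasDerivAt_lineMap
  have hd : ∀ t ∈ Set.Icc (0 : ℝ) 1,
      HasDerivAt (fun t => g (L t) - g p - t • g' p (q - p))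
        (g' (L t) (q - p) - g' p (q - p)) t := by
    intro t ht
    have h1 : HasDerivAt (fun t => g (L t)) (g' (L t) (q - p)) t :=
      (hder _ (hmem t ht)).comp_hasDerivAt t (hdL t)
    have h2 := (h1.sub_const (g p)).sub ((hasDerivAt_id t).smul_const (g' p (q - p)))
    rw [one_smul] at h2
    exact h2
  have hB : ∀ t : ℝ, HasDerivAt (fun t => H * ‖q - p‖ ^ (1 + ν) / (1 + ν) * t ^ (1 + ν))
      (H * ‖q - p‖ ^ (1 + ν) * t ^ ν) t := by
    intro t
    have h := (Real.hasDerivAt_rpow_const (x := t) (p := 1 + ν)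
      (Or.inr (by linarith))).const_mul (H * ‖q - p‖ ^ (1 + ν) / (1 + ν))
    have e : H * ‖q - p‖ ^ (1 + ν) / (1 + ν) * ((1 + ν) * t ^ (1 + ν - 1))
        = H * ‖q - p‖ ^ (1 + ν) * t ^ ν := by
      have : 1 + ν ≠ 0 := by linarith
      rw [add_sub_cancel_left]
      field_simp
    exact e ▸ h
  have key := image_norm_le_of_norm_deriv_right_le_deriv_boundary
    (f := fun t => g (L t) - g p - t • g' p (q - p)) (a := 0) (b := 1)
    (fun t ht => (hd t ht).continuousAt.continuousWithinAt)
    (fun t ht => (hd t (Set.Ico_subset_Icc_self ht)).hasDerivWithinAt)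
    (by simp [hL, Real.zero_rpow (by linarith : (1 + ν) ≠ 0)]) hB
    (by
      intro t ht
      have ht' := Set.Ico_subset_Icc_self ht
      have h1 : ‖L t - p‖ = t * ‖q - p‖ := by
        simp [hL, AffineMap.lineMap_apply, norm_smul, abs_of_nonneg ht.1]
      calc ‖g' (L t) (q - p) - g' p (q - p)‖ = ‖(g' (L t) - g' p) (q - p)‖ := by simp
        _ ≤ ‖g' (L t) - g' p‖ * ‖q - p‖ := ContinuousLinearMap.le_opNorm _ _
        _ ≤ (H * ‖L t - p‖ ^ ν) * ‖q - p‖ := by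
          gcongr
          exact hHolder _ (hmem t ht') _ hp
        _ = H * ‖q - p‖ ^ (1 + ν) * t ^ ν := by
          rw [h1, Real.mul_rpow ht.1 (norm_nonneg _),
            Real.rpow_add_of_nonneg (norm_nonneg _) zero_le_one hν, Real.rpow_one]
          ring)
    (Set.right_mem_Icc.2 zero_le_one)
  simpa [hL] using key

/-- One summand of `B k` in the cubic case, with `b = a i` and `n = i`. -/
theorem cubic_term_le {ν b n : ℝ} (hν : ν ∈ Set.Icc (0 : ℝ) 1) (hb : 0 ≤ b) (hn : 1 ≤ n)
    (hbn : b ≤ 3 * n ^ 2) : b ^ (2 + ν) / (n ^ 3) ^ (1 + ν) ≤ 27 * n ^ (1 - ν) := by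
  obtain ⟨h0, h1⟩ := hν
  have hn0 : 0 < n := by linarith
  rw [div_le_iff₀ (by positivity)]
  calc b ^ (2 + ν) ≤ (3 * n ^ 2) ^ (2 + ν) := by gcongr
    _ = 3 ^ (2 + ν) * n ^ (2 * (2 + ν)) := by
      rw [Real.mul_rpow (by norm_num) (by positivity), Real.rpow_mul hn0.le, Real.rpow_two]
    _ ≤ 3 ^ (3 : ℝ) * n ^ (2 * (2 + ν)) := by
      gcongr
      · norm_num
      · linarith
    _ = 27 * n ^ (1 - ν) * (n ^ 3) ^ (1 + ν) := by
      have h3 : (n ^ 3) ^ (1 + ν) = n ^ (3 * (1 + ν)) := by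
        rw [Real.rpow_mul hn0.le]; norm_cast
      rw [h3, mul_assoc, ← Real.rpow_add hn0]
      norm_num
      ring_nf


/-- Theorem 3: convergence of the Contracting-Domain Newton
Method II. `E` models `ℝⁿ` with an arbitrary norm; setup as in Statement 6.
The iterates have the form `x_{k+1} = x_k + γ_k (v_{k+1} − x_k)` with
`v_{k+1} ∈ dom ψ` and satisfy the stationarity condition of the method's
contracted-domain subproblem. The first conclusion is the estimating-function
inequality `φ_k(x) ≥ A_k F(x_k) − B_k` for general positive coefficients; the
second is the rate for `A_k = k³`, including the `O(H_ν D^{2+ν}/k^{1+ν})`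
bound. -/
theorem stmt_9 {E : Type*} [NormedAddCommGroup E] [NormedSpace ℝ E]
    (s : Set E) (hs : Convex ℝ s) (ψ : E → ℝ) (hψ : ConvexOn ℝ s ψ)
    (D : ℝ) (hD : ∀ x ∈ s, ∀ y ∈ s, ‖x - y‖ ≤ D)
    (f : E → ℝ) (f' : E → E →L[ℝ] ℝ) (f'' : E → E →L[ℝ] E →L[ℝ] ℝ)
    (hconv : ConvexOn ℝ s f)
    (hder1 : ∀ x ∈ s, HasFDerivAt f (f' x) x)
    (hder2 : ∀ x ∈ s, HasFDerivAt f' (f'' x) x)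
    (hcont : ContinuousOn f'' s)
    (ν Hν : ℝ) (hν : ν ∈ Set.Icc (0 : ℝ) 1) (hH : 0 ≤ Hν)
    (hHolder : ∀ x ∈ s, ∀ y ∈ s, ‖f'' x - f'' y‖ ≤ Hν * ‖x - y‖ ^ ν)
    (a : ℕ → ℝ) (ha : ∀ k, 1 ≤ k → 0 < a k)
    (A : ℕ → ℝ) (hA : ∀ k, A k = ∑ i ∈ Finset.Icc 1 k, a i)
    (γ : ℕ → ℝ) (hγ : ∀ k, γ k = a (k + 1) / A (k + 1))
    (x v : ℕ → E) (hx0 : x 0 ∈ s) (hv : ∀ k, v (k + 1) ∈ s)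
    (hupd : ∀ k, x (k + 1) = x k + γ k • (v (k + 1) - x k))
    (hstat : ∀ k, ∀ y ∈ s,
      f' (x k) (y - v (k + 1)) + f'' (x k) (x (k + 1) - x k) (y - v (k + 1))
          + 1 / γ k * ψ (γ k • y + (1 - γ k) • x k)
        ≥ 1 / γ k * ψ (x (k + 1)))
    (F : E → ℝ) (hF : ∀ y, F y = f y + ψ y)
    (Fstar : ℝ) (hFstar : Fstar = sInf (F '' s))
    (φ : ℕ → E → ℝ)
    (hφ : ∀ k y, φ k y = ∑ i ∈ Finset.Icc 1 k, a i * (f (x i) + f' (x i) (y - x i) + ψ y))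
    (B : ℕ → ℝ)
    (hB : ∀ k, B k = Hν * D ^ (2 + ν) / (1 + ν)
        * ∑ i ∈ Finset.Icc 1 k, a i ^ (2 + ν) / A i ^ (1 + ν))
    (ℓ : ℕ → ℝ) (hℓ : ∀ k, ℓ k = F (x k) - sInf (φ k '' s) / A k) :
    (∀ k, ∀ y ∈ s, φ k y ≥ A k * F (x k) - B k) ∧
    ((∀ k, A k = (k : ℝ) ^ 3) →
      (∀ k, 1 ≤ k → F (x k) - Fstar ≤ ℓ k ∧ ℓ k ≤ B k / A k) ∧
      ∃ C : ℝ, 0 < C ∧ ∀ k, 1 ≤ k →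
        ℓ k ≤ C * Hν * D ^ (2 + ν) / (k : ℝ) ^ (1 + ν)) := by
  have h1ν : 0 < 1 + ν := by linarith [hν.1]
  have hD0 : 0 ≤ D := (norm_nonneg _).trans (hD _ hx0 _ hx0)
  have hA0 : A 0 = 0 := by simp [hA]
  have hAs : ∀ k, A (k + 1) = A k + a (k + 1) := by
    intro k
    rw [hA, hA, Finset.sum_Icc_succ_top (by omega)]
  have has : ∀ k, 0 < a (k + 1) := fun k => ha _ (by omega)
  have hAnn : ∀ k, 0 ≤ A k := by
    intro k
    rw [hA]
    exact Finset.sum_nonneg fun i hi => (ha i (Finset.mem_Icc.1 hi).1).le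
  have hApos : ∀ k, 0 < A (k + 1) := fun k => by linarith [hAs k, has k, hAnn k]
  have hγ0 : ∀ k, 0 < γ k := fun k => by rw [hγ]; exact div_pos (has k) (hApos k)
  have hγ1 : ∀ k, γ k ≤ 1 := fun k => by
    rw [hγ, div_le_one (hApos k)]; linarith [hAs k, hAnn k]
  have hAγ : ∀ k, A (k + 1) * γ k = a (k + 1) := fun k => by
    rw [hγ, mul_div_cancel₀ _ (hApos k).ne']
  have hcomb : ∀ k, ∀ y ∈ s, ∀ z ∈ s, γ k • y + (1 - γ k) • z ∈ s := fun k y hy z hz =>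
    hs hy hz (hγ0 k).le (by linarith [hγ1 k]) (by ring)
  have hxs : ∀ k, x k ∈ s := by
    intro k
    induction k with
    | zero => exact hx0
    | succ k ih =>
      have := hcomb k _ (hv k) _ ih
      rw [hupd k]
      convert this using 1
      module
  have hφs : ∀ k y, φ (k + 1) y
      = φ k y + a (k + 1) * (f (x (k + 1)) + f' (x (k + 1)) (y - x (k + 1)) + ψ y) := by
    intro k y
    rw [hφ, hφ, Finset.sum_Icc_succ_top (by omega)]
  have hBs : ∀ k, B (k + 1) = B k + Hν * D ^ (2 + ν) / (1 + ν)
      * (a (k + 1) ^ (2 + ν) / A (k + 1) ^ (1 + ν)) := by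
    intro k
    rw [hB, hB, Finset.sum_Icc_succ_top (by omega), mul_add]
  have part1 : ∀ k, ∀ y ∈ s, φ k y ≥ A k * F (x k) - B k := by
    intro k
    induction k with
    | zero => intro y _; simp [hφ, hA0, hB]
    | succ k ih =>
      intro y hy
      have ih' := ih y hy
      have hgrad := mul_le_mul_of_nonneg_left
        (gradient_ineq hconv (hxs (k + 1)) (hxs k) (hder1 _ (hxs (k + 1)))) (hAnn k)
      have hψc := hψ.2 hy (hxs k) (hγ0 k).le (by linarith [hγ1 k] : 0 ≤ 1 - γ k) (by ring)
      simp only [smul_eq_mul] at hψc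
      -- Scaling by `γ k` removes the factors `1 / γ k` from the stationarity condition.
      have hst := mul_le_mul_of_nonneg_left (hstat k y hy) (hγ0 k).le
      have hγne := (hγ0 k).ne'
      have e1 : γ k * (1 / γ k * ψ (x (k + 1))) = ψ (x (k + 1)) := by field_simp
      have e2 : γ k * (1 / γ k * ψ (γ k • y + (1 - γ k) • x k))
          = ψ (γ k • y + (1 - γ k) • x k) := by field_simp
      rw [e1, mul_add, e2] at hst
      have hψA := mul_le_mul_of_nonneg_left (hst.trans (add_le_add_right hψc _)) (hApos k).le
      have hAγk := hAγ k
      have hAsk := hAs k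
      -- This is where `A (k+1) • x (k+1) = A k • x k + a (k+1) • v (k+1)` enters.
      have hlin : a (k + 1) * f' (x (k + 1)) (y - x (k + 1))
          + A k * f' (x (k + 1)) (x k - x (k + 1))
          = a (k + 1) * f' (x (k + 1)) (y - v (k + 1)) := by
        have : a (k + 1) • (y - x (k + 1)) + A k • (x k - x (k + 1))
            = a (k + 1) • (y - v (k + 1)) := by
          have e : A k = A (k + 1) - A (k + 1) * γ k := by linarith
          rw [hupd k, ← hAγk, e]
          module
        have h := congrArg (f' (x (k + 1))) this
        simpa only [map_add, map_smul, smul_eq_mul] using h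
      have htay := norm_taylor_le hs hder2 hν.1 hHolder (hxs k) (hxs (k + 1))
      have hstep : ‖x (k + 1) - x k‖ ≤ γ k * D := by
        rw [hupd k, add_sub_cancel_left, norm_smul, Real.norm_of_nonneg (hγ0 k).le]
        exact mul_le_mul_of_nonneg_left (hD _ (hv k) _ (hxs k)) (hγ0 k).le
      have herr : |(f' (x (k + 1)) - f' (x k) - f'' (x k) (x (k + 1) - x k)) (y - v (k + 1))|
          ≤ Hν * (γ k * D) ^ (1 + ν) / (1 + ν) * D := by
        rw [← Real.norm_eq_abs]
        refine (ContinuousLinearMap.le_opNorm _ _).trans ?_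
        refine mul_le_mul (htay.trans ?_) (hD _ hy _ (hv k)) (norm_nonneg _) ?_
        · gcongr
        · have := mul_nonneg (hγ0 k).le hD0
          positivity
      have herr' := mul_le_mul_of_nonneg_left (neg_le_of_abs_le herr) (has k).le
      have hconst : a (k + 1) * (Hν * (γ k * D) ^ (1 + ν) / (1 + ν) * D)
          = Hν * D ^ (2 + ν) / (1 + ν) * (a (k + 1) ^ (2 + ν) / A (k + 1) ^ (1 + ν)) := by
        have p1 : D ^ (2 + ν) = D * D ^ (1 + ν) := by
          rw [show 2 + ν = 1 + (1 + ν) by ring,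
            Real.rpow_add_of_nonneg hD0 zero_le_one h1ν.le, Real.rpow_one]
        have p2 : a (k + 1) ^ (2 + ν) = a (k + 1) * a (k + 1) ^ (1 + ν) := by
          rw [show 2 + ν = 1 + (1 + ν) by ring,
            Real.rpow_add_of_nonneg (has k).le zero_le_one h1ν.le, Real.rpow_one]
        rw [p1, p2, Real.mul_rpow (hγ0 k).le hD0, hγ,
          Real.div_rpow (has k).le (hApos k).le]
        ring
      simp only [sub_apply] at herr'
      rw [hφs, hBs, ← hconst, hF]
      rw [hF] at ih'
      have e3 : A (k + 1) * (γ k * (f' (x k) (y - v (k + 1))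
          + f'' (x k) (x (k + 1) - x k) (y - v (k + 1))))
          = a (k + 1) * (f' (x k) (y - v (k + 1))
          + f'' (x k) (x (k + 1) - x k) (y - v (k + 1))) := by rw [← mul_assoc, hAγk]
      have e4 : A (k + 1) * (γ k * ψ y + (1 - γ k) * ψ (x k))
          = a (k + 1) * ψ y + A k * ψ (x k) := by
        linear_combination (ψ y - ψ (x k)) * hAγk + ψ (x k) * hAsk
      rw [mul_add (A (k + 1)), e3, e4] at hψA
      have e5 : A (k + 1) * f (x (k + 1)) = A k * f (x (k + 1)) + a (k + 1) * f (x (k + 1)) := by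
        rw [hAsk]; ring
      linarith
  refine ⟨part1, fun hcube => ?_⟩
  have hne : s.Nonempty := ⟨_, hx0⟩
  have hAk : ∀ k, 1 ≤ k → 0 < A k := by
    intro k hk
    obtain ⟨m, rfl⟩ := Nat.exists_eq_add_of_le' hk
    exact hApos m
  -- Without this bound the real infimum of `φ k` would be the junk value `0`.
  have hbdd : ∀ k, BddBelow (φ k '' s) := fun k =>
    ⟨A k * F (x k) - B k, by rintro _ ⟨y, hy, rfl⟩; exact part1 k y hy⟩
  have hφle : ∀ k, ∀ y ∈ s, φ k y ≤ A k * F y := by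
    intro k y hy
    rw [hφ, hA, Finset.sum_mul]
    refine Finset.sum_le_sum fun i hi => ?_
    rw [hF]
    have := gradient_ineq hconv (hxs i) hy (hder1 _ (hxs i))
    exact mul_le_mul_of_nonneg_left (by linarith) (ha i (Finset.mem_Icc.1 hi).1).le
  have hle : ∀ k, 1 ≤ k → F (x k) - Fstar ≤ ℓ k ∧ ℓ k ≤ B k / A k := by
    intro k hk
    have hp := hAk k hk
    constructor
    · have : sInf (φ k '' s) / A k ≤ Fstar := by
        rw [hFstar]
        refine le_csInf (hne.image _) ?_
        rintro _ ⟨y, hy, rfl⟩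
        rw [div_le_iff₀ hp, mul_comm]
        exact (csInf_le (hbdd k) ⟨y, hy, rfl⟩).trans (hφle k y hy)
      rw [hℓ]; linarith
    · have : A k * F (x k) - B k ≤ sInf (φ k '' s) := by
        refine le_csInf (hne.image _) ?_
        rintro _ ⟨y, hy, rfl⟩
        exact part1 k y hy
      have h2 := div_le_div_of_nonneg_right this hp.le
      rw [sub_div, mul_div_cancel_left₀ _ hp.ne'] at h2
      rw [hℓ]; linarith
  refine ⟨hle, 27, by norm_num, fun k hk => (hle k hk).2.trans ?_⟩
  have hk1 : (1 : ℝ) ≤ k := by exact_mod_cast hk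
  have hk0 : (0 : ℝ) < k := by linarith
  have hsum : ∑ i ∈ Finset.Icc 1 k, a i ^ (2 + ν) / A i ^ (1 + ν)
      ≤ k * (27 * (k : ℝ) ^ (1 - ν)) := by
    have : ∀ i ∈ Finset.Icc 1 k, a i ^ (2 + ν) / A i ^ (1 + ν) ≤ 27 * (k : ℝ) ^ (1 - ν) := by
      intro i hi
      obtain ⟨hi1, hik⟩ := Finset.mem_Icc.1 hi
      have hi1' : (1 : ℝ) ≤ i := by exact_mod_cast hi1
      have hai : a i ≤ 3 * (i : ℝ) ^ 2 := by
        obtain ⟨m, rfl⟩ := Nat.exists_eq_add_of_le' hi1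
        have h := hAs m
        rw [hcube, hcube] at h
        have hm : (0 : ℝ) ≤ m := Nat.cast_nonneg m
        push_cast at h ⊢
        nlinarith
      rw [hcube]
      refine (cubic_term_le hν (ha i hi1).le hi1' hai).trans ?_
      have : (0 : ℝ) ≤ 1 - ν := by linarith [hν.2]
      gcongr
    simpa using Finset.sum_le_card_nsmul _ _ _ this
  have hpow : (k : ℝ) * (27 * (k : ℝ) ^ (1 - ν)) * (k : ℝ) ^ (1 + ν) = 27 * (k : ℝ) ^ 3 := by
    have : (k : ℝ) ^ (1 - ν) * (k : ℝ) ^ (1 + ν) = (k : ℝ) ^ 2 := by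
      rw [← Real.rpow_add hk0, ← Real.rpow_two]; norm_num
    linear_combination 27 * (k : ℝ) * this
  rw [hB, hcube, div_le_div_iff₀ (by positivity) (by positivity)]
  have hc0 : 0 ≤ Hν * D ^ (2 + ν) := by positivity
  have hc : Hν * D ^ (2 + ν) / (1 + ν) ≤ Hν * D ^ (2 + ν) :=
    div_le_self hc0 (by linarith [hν.1])
  calc _ ≤ Hν * D ^ (2 + ν) * (k * (27 * (k : ℝ) ^ (1 - ν))) * (k : ℝ) ^ (1 + ν) := by
        refine mul_le_mul_of_nonneg_right (mul_le_mul hc hsum ?_ hc0) (by positivity)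
        refine Finset.sum_nonneg fun i hi => ?_
        have := ha i (Finset.mem_Icc.1 hi).1
        have := hAnn i
        positivity
    _ = 27 * Hν * D ^ (2 + ν) * (k : ℝ) ^ 3 := by
      rw [mul_assoc, hpow]; ring
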